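/- If an ordinal α has a nontrivial ≤₂-reach, i.e. α <₂ β for some ordinal β, then α is the proper supremum of its <₁-predecessors: the set {γ : γ <₁ α} is nonempty and its supremum equals α (while α itself does not belong to it). -/

import Mathlib

open FirstOrder

/-- The relation symbols of the language of `ℛ₂`: three binary relations. -/
inductive ordRel : ℕ → Type
  | le : ordRel 2
  | le1 : ordRel 2
  | le2 : ordRel 2

/-- The first-order language with three binary relation symbols `≤`, `≤₁`, `≤₂`. -/
def ordLang : FirstOrder.Language := ⟨fun _ => Empty, ordRel⟩

/-- The `ordLang`-structure on the set of ordinals below `β`, interpreting the three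
relation symbols by `≤` and the given relations `le1`, `le2`. -/
def segStr (le1 le2 : Ordinal → Ordinal → Prop) (β : Ordinal) :
    ordLang.Structure {x : Ordinal // x < β} where
  funMap := fun f => Empty.elim f
  RelMap
    | .le => fun v => (v 0).1 ≤ (v 1).1
    | .le1 => fun v => le1 (v 0).1 (v 1).1
    | .le2 => fun v => le2 (v 0).1 (v 1).1

/-- Σ₁-formulas: a block of existential quantifiers applied to a quantifier-free formula. -/
inductive IsSigma1 {L : FirstOrder.Language} {α : Type} :
    {n : ℕ} → L.BoundedFormula α n → Prop
  | of_isQF {n} {φ : L.BoundedFormula α n} (h : φ.IsQF) : IsSigma1 φ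
  | ex {n} {φ : L.BoundedFormula α (n + 1)} (h : IsSigma1 φ) : IsSigma1 φ.ex

/-- Π₁-formulas: a block of universal quantifiers applied to a quantifier-free formula. -/
inductive IsPi1 {L : FirstOrder.Language} {α : Type} :
    {n : ℕ} → L.BoundedFormula α n → Prop
  | of_isQF {n} {φ : L.BoundedFormula α n} (h : φ.IsQF) : IsPi1 φ
  | all {n} {φ : L.BoundedFormula α (n + 1)} (h : IsPi1 φ) : IsPi1 φ.all

/-- Σ₂-formulas: a block of existential quantifiers applied to a Π₁-formula. -/
inductive IsSigma2 {L : FirstOrder.Language} {α : Type} :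
    {n : ℕ} → L.BoundedFormula α n → Prop
  | of_isPi1 {n} {φ : L.BoundedFormula α n} (h : IsPi1 φ) : IsSigma2 φ
  | ex {n} {φ : L.BoundedFormula α (n + 1)} (h : IsSigma2 φ) : IsSigma2 φ.ex

/-- Realization of a formula with `k` parameters in the segment structure below `β`. -/
def RealizeIn (le1 le2 : Ordinal → Ordinal → Prop) (β : Ordinal) {k : ℕ}
    (φ : ordLang.Formula (Fin k)) (v : Fin k → {x : Ordinal // x < β}) : Prop :=
  letI := segStr le1 le2 β
  φ.Realize v

/-- `a ≤ b` and the segment below `a` is an elementary substructure of the segment below `b`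
with respect to the class `C` of formulas (with parameters from below `a`). -/
def ElemSub (C : ∀ k : ℕ, ordLang.Formula (Fin k) → Prop)
    (le1 le2 : Ordinal → Ordinal → Prop) (a b : Ordinal) : Prop :=
  ∃ hab : a ≤ b,
    ∀ (k : ℕ) (φ : ordLang.Formula (Fin k)), C k φ →
      ∀ v : Fin k → {x : Ordinal // x < a},
        RealizeIn le1 le2 a φ v ↔
          RealizeIn le1 le2 b φ (fun j => ⟨(v j).1, lt_of_lt_of_le (v j).2 hab⟩)

/-- The pair of relations `le1`, `le2` satisfies the simultaneous recursive definition of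
`≤₁` and `≤₂` on the ordinals: `α ≤ᵢ β` iff `α ≤ β` and the segment below `α` is a
Σᵢ-elementary substructure of the segment below `β`. -/
def IsR2Pair (le1 le2 : Ordinal → Ordinal → Prop) : Prop :=
  (∀ a b, le1 a b ↔ ElemSub (fun _ φ => IsSigma1 φ) le1 le2 a b) ∧
  (∀ a b, le2 a b ↔ ElemSub (fun _ φ => IsSigma2 φ) le1 le2 a b)

/-- The strict part of `≤₁`. -/
def Lt1 (le1 : Ordinal → Ordinal → Prop) (a b : Ordinal) : Prop := le1 a b ∧ a ≠ b

/-- The strict part of `≤₂`. -/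
def Lt2 (le2 : Ordinal → Ordinal → Prop) (a b : Ordinal) : Prop := le2 a b ∧ a ≠ b

/-- `1^∞`: the least ordinal `ν` such that below `ν` there are `<₂`-chains of every finite
length. -/
noncomputable def OneInfty (le2 : Ordinal → Ordinal → Prop) : Ordinal :=
  sInf {ν : Ordinal | ∀ n : ℕ, ∃ β : Fin n → Ordinal,
    (∀ i, β i < ν) ∧
    ∀ (i : ℕ) (hi : i + 1 < n), Lt2 le2 (β ⟨i, Nat.lt_of_succ_lt hi⟩) (β ⟨i + 1, hi⟩)}

/-- A respecting forest of order 2: a finite structure with a linear order `≤₀` and partial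
orders `≤₁`, `≤₂` which are forests, with `≤₂ ⊆ ≤₁ ⊆ ≤₀`, and `≤ᵢ₊₁` respecting `≤ᵢ`. -/
structure RForest where
  P : Type
  [fintypeP : Fintype P]
  le0 : P → P → Prop
  le1 : P → P → Prop
  le2 : P → P → Prop
  le0_refl : ∀ p, le0 p p
  le0_trans : ∀ p q r, le0 p q → le0 q r → le0 p r
  le0_antisymm : ∀ p q, le0 p q → le0 q p → p = q
  le0_total : ∀ p q, le0 p q ∨ le0 q p
  le1_refl : ∀ p, le1 p p
  le1_trans : ∀ p q r, le1 p q → le1 q r → le1 p r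
  le1_antisymm : ∀ p q, le1 p q → le1 q p → p = q
  le2_refl : ∀ p, le2 p p
  le2_trans : ∀ p q r, le2 p q → le2 q r → le2 p r
  le2_antisymm : ∀ p q, le2 p q → le2 q p → p = q
  le2_sub_le1 : ∀ p q, le2 p q → le1 p q
  le1_sub_le0 : ∀ p q, le1 p q → le0 p q
  forest1 : ∀ p q r, le1 q p → le1 r p → le1 q r ∨ le1 r q
  forest2 : ∀ p q r, le2 q p → le2 r p → le2 q r ∨ le2 r q
  respects1 : ∀ p q r, le0 p q → le0 q r → le1 p r → le1 p q
  respects2 : ∀ p q r, le1 p q → le1 q r → le2 p r → le2 p q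

attribute [instance] RForest.fintypeP

/-- The finite set `X` of ordinals, with the relations induced from `ℛ₂`, is isomorphic to the
respecting forest `F`. -/
def Realizes (le1 le2 : Ordinal → Ordinal → Prop) (F : RForest) (X : Finset Ordinal) : Prop :=
  ∃ e : F.P ≃ {x // x ∈ X}, ∀ p q : F.P,
    (F.le0 p q ↔ ((e p : Ordinal) ≤ (e q : Ordinal))) ∧
    (F.le1 p q ↔ le1 (e p : Ordinal) (e q : Ordinal)) ∧
    (F.le2 p q ↔ le2 (e p : Ordinal) (e q : Ordinal))

/-- Pointwise comparison of two finite sets of ordinals via their increasing enumerations. -/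
def pwLE (X Y : Finset Ordinal) : Prop :=
  ∃ h : X.card = Y.card, ∀ i : Fin X.card,
    ((X.orderIsoOfFin rfl i : {x // x ∈ X}) : Ordinal) ≤
      ((Y.orderIsoOfFin h.symm i : {x // x ∈ Y}) : Ordinal)

/-- `X` is the isominimal realization of the respecting forest `F` in `ℛ₂`: it is isomorphic
to `F` and pointwise minimal among all finite substructures of `ℛ₂` isomorphic to `F`. -/
def IsIsominimalRealization (le1 le2 : Ordinal → Ordinal → Prop) (F : RForest)
    (X : Finset Ordinal) : Prop :=
  Realizes le1 le2 F X ∧ ∀ Y : Finset Ordinal, Realizes le1 le2 F Y → pwLE X Y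

/-- A covering of the respecting forest `F` into `ℛ₂`. -/
def IsCovering (le1 le2 : Ordinal → Ordinal → Prop) (F : RForest)
    (c : F.P → Ordinal) : Prop :=
  (∀ p q, F.le0 p q ↔ c p ≤ c q) ∧
  (∀ p q, F.le1 p q → le1 (c p) (c q)) ∧
  (∀ p q, F.le2 p q → le2 (c p) (c q))


/-- A covering of the respecting forest `F` into the respecting forest `G`. -/
def ForestCovering (F G : RForest) (f : F.P → G.P) : Prop :=
  (∀ p q, F.le0 p q ↔ G.le0 (f p) (f q)) ∧
  (∀ p q, F.le1 p q → G.le1 (f p) (f q)) ∧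
  (∀ p q, F.le2 p q → G.le2 (f p) (f q))

/-!
Let `α <₂ β`. Then `α ≤₁ y` for every `y` with `α ≤ y < β`, so for each `δ < α` the segment below
`β` satisfies the Σ₂-formula `∃ x, ∀ y, δ < x ∧ (x ≤ y → x ≤₁ y)`, with `x = α` as witness. Hence
the segment below `α` satisfies it too. This makes `α` a limit, and the witness `x` obtained below
`α` satisfies `x <₁ α`: a Σ₁-fact of the segment below the limit `α` involves only finitely many
witnesses, so it already holds in the segment below some `y` with `x ≤ y < α`, and then descends
along `x ≤₁ y`.
-/

open FirstOrder.Language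

section Sigma

variable {L : Language} {ι : Type} {n : ℕ} {φ : L.BoundedFormula ι n}

theorem IsSigma1.isExistential (h : IsSigma1 φ) : φ.IsExistential := by
  induction h with
  | of_isQF h => exact .of_isQF h
  | ex _ ih => exact .ex ih

theorem IsSigma1.isSigma2 (h : IsSigma1 φ) : IsSigma2 φ := by
  induction h with
  | of_isQF h => exact .of_isPi1 (.of_isQF h)
  | ex _ ih => exact .ex ih

-- `s` collects witnesses for the existential quantifiers of `φ`.
theorem IsSigma1.exists_finset_forall_realize {N : Type*} [L.Structure N] (h : IsSigma1 φ)
    {v : ι → N} {xs : Fin n → N} (hφ : φ.Realize v xs) :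
    ∃ s : Finset N, ∀ {M : Type*} [L.Structure M] (f : M ↪[L] N) (v' : ι → M) (xs' : Fin n → M),
      f ∘ v' = v → f ∘ xs' = xs → ↑s ⊆ Set.range f → φ.Realize v' xs' := by
  classical
  induction h with
  | of_isQF h =>
    refine ⟨∅, ?_⟩
    rintro M _ f v' xs' rfl rfl -
    exact (h.realize_embedding f).1 hφ
  | ex _ ih =>
    obtain ⟨x, hx⟩ := BoundedFormula.realize_ex.1 hφ
    obtain ⟨s, hs⟩ := ih hx
    refine ⟨insert x s, ?_⟩
    rintro M _ f v' xs' rfl rfl hsub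
    rw [Finset.coe_insert, Set.insert_subset_iff] at hsub
    obtain ⟨⟨x', rfl⟩, hsub⟩ := hsub
    exact BoundedFormula.realize_ex.2
      ⟨x', hs f v' (Fin.snoc xs' x') rfl (Fin.comp_snoc f xs' x') hsub⟩

end Sigma

/-- The initial segment `(β; ≤, ≤₁, ≤₂)` as a type of its own, so that the two relations can be
recovered from the type and `segStr` becomes an instance. -/
def Segment (_le1 _le2 : Ordinal → Ordinal → Prop) (β : Ordinal) : Type _ :=
  {x : Ordinal // x < β}

instance : ordLang.IsOrdered :=
  ⟨ordRel.le⟩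

/-- The symbol `≤₁`, typed as a relation symbol of `ordLang` so that Mathlib's lemmas on
`ordLang`-formulas apply to it. -/
def le1Symb : ordLang.Relations 2 :=
  ordRel.le1

namespace Segment

variable {le1 le2 : Ordinal → Ordinal → Prop} {a b : Ordinal}

instance : ordLang.Structure (Segment le1 le2 a) :=
  segStr le1 le2 a

noncomputable instance : LinearOrder (Segment le1 le2 a) :=
  inferInstanceAs (LinearOrder {x : Ordinal // x < a})

instance : ordLang.OrderedStructure (Segment le1 le2 a) :=
  ⟨fun _ => Iff.rfl⟩

/-- The inclusion of the segment below `a` into the segment below `b ≥ a`, as an embedding of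
`ordLang`-structures. -/
def inclusion (hab : a ≤ b) : Segment le1 le2 a ↪[ordLang] Segment le1 le2 b where
  toFun x := ⟨x.1, x.2.trans_le hab⟩
  inj' _ _ h := Subtype.ext (Subtype.mk.inj h)
  map_fun' f := Empty.elim f
  map_rel' r _ := by cases r <;> rfl

theorem mem_range_inclusion {hab : a ≤ b} {x : Segment le1 le2 b} (hx : x.1 < a) :
    x ∈ Set.range (inclusion (le1 := le1) (le2 := le2) hab) :=
  ⟨⟨x.1, hx⟩, rfl⟩

theorem relMap_le1Symb {x y : Segment le1 le2 a} :
    Structure.RelMap le1Symb ![x, y] ↔ le1 x.1 y.1 :=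
  Iff.rfl

end Segment

/-- `a ≤₁ b` as defined by the recursion: Σ₁-elementarity of the segment below `a` in the one below
`b`, with respect to arbitrary relations `le1` and `le2`. -/
abbrev ElemSub1 (le1 le2 : Ordinal → Ordinal → Prop) (a b : Ordinal) : Prop :=
  ElemSub (fun _ φ => IsSigma1 φ) le1 le2 a b

/-- `a ≤₂ b` as defined by the recursion: Σ₂-elementarity of the segment below `a` in the one below
`b`, with respect to arbitrary relations `le1` and `le2`. -/
abbrev ElemSub2 (le1 le2 : Ordinal → Ordinal → Prop) (a b : Ordinal) : Prop :=
  ElemSub (fun _ φ => IsSigma2 φ) le1 le2 a b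

section ElemSub

variable {le1 le2 : Ordinal → Ordinal → Prop} {a b c : Ordinal}

theorem realize_inclusion_of_isSigma1 {k : ℕ} {φ : ordLang.Formula (Fin k)} (hφ : IsSigma1 φ)
    (hab : a ≤ b) {v : Fin k → Segment le1 le2 a} (h : φ.Realize v) :
    φ.Realize (Segment.inclusion hab ∘ v) := by
  have := hφ.isExistential.realize_embedding (Segment.inclusion hab) h
  rwa [Subsingleton.elim (Segment.inclusion hab ∘ default) default] at this

theorem elemSub1_iff : ElemSub1 le1 le2 a b ↔ ∃ hab : a ≤ b,
    ∀ (k : ℕ) (φ : ordLang.Formula (Fin k)), IsSigma1 φ → ∀ v : Fin k → Segment le1 le2 a,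
      φ.Realize (Segment.inclusion hab ∘ v) → φ.Realize v :=
  exists_congr fun hab => forall₄_congr fun _ _ hφ _ =>
    ⟨Iff.mpr, fun h => ⟨realize_inclusion_of_isSigma1 hφ hab, h⟩⟩

theorem ElemSub2.elemSub1 (h : ElemSub2 le1 le2 a b) : ElemSub1 le1 le2 a b :=
  ⟨h.1, fun k φ hφ => h.2 k φ hφ.isSigma2⟩

theorem ElemSub1.of_le_of_le (h : ElemSub1 le1 le2 a c) (hab : a ≤ b) (hbc : b ≤ c) :
    ElemSub1 le1 le2 a b := by
  obtain ⟨_, hac⟩ := elemSub1_iff.1 h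
  exact elemSub1_iff.2 ⟨hab, fun k φ hφ v hv =>
    hac k φ hφ v (realize_inclusion_of_isSigma1 hφ hbc hv)⟩

theorem ElemSub1.pos (h : ElemSub1 le1 le2 a b) (hne : a ≠ b) : 0 < a := by
  obtain ⟨hab, h⟩ := elemSub1_iff.1 h
  let φ : ordLang.Formula (Fin 0) := ∃' ⊤
  have hb : φ.Realize (Segment.inclusion (le1 := le1) (le2 := le2) hab ∘ default) :=
    BoundedFormula.realize_ex.2 ⟨⟨a, hab.lt_of_ne hne⟩, BoundedFormula.realize_top.2 trivial⟩
  obtain ⟨x, -⟩ := BoundedFormula.realize_ex.1 (h 0 φ (.ex (.of_isQF .top)) default hb)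
  exact zero_le.trans_lt x.2

theorem elemSub1_of_isSuccPrelimit (hb : Order.IsSuccPrelimit b) (hab : a < b)
    (h : ∀ y, a ≤ y → y < b → ElemSub1 le1 le2 a y) : ElemSub1 le1 le2 a b := by
  refine elemSub1_iff.2 ⟨hab.le, fun k φ hφ v hv => ?_⟩
  obtain ⟨s, hs⟩ := hφ.exists_finset_forall_realize hv
  let y := max a (s.sup fun x => Order.succ x.1)
  have hay : a ≤ y := le_max_left ..
  have hyb : y < b :=
    max_lt hab ((Finset.sup_lt_iff (bot_le.trans_lt hab)).2 fun x _ => hb.succ_lt x.2)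
  have hsy : ↑s ⊆ Set.range (Segment.inclusion (le1 := le1) (le2 := le2) hyb.le) := fun x hx =>
    Segment.mem_range_inclusion <| (Order.lt_succ x.1).trans_le <|
      (Finset.le_sup (f := fun x => Order.succ x.1) hx).trans (le_max_right ..)
  have hφy : φ.Realize (Segment.inclusion (le1 := le1) (le2 := le2) hay ∘ v) :=
    hs (Segment.inclusion hyb.le) _ default rfl (Subsingleton.elim _ _) hsy
  obtain ⟨_, h⟩ := elemSub1_iff.1 (h y hay hyb)
  exact h k φ hφ v hφy

end ElemSub

section Reflection

/-- The Σ₂-formula `∃ x, ∀ y, p < x ∧ (x ≤ y → x ≤₁ y)` with parameter `p`. The conjunct `p < x`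
stands inside the scope of `∀ y` to keep the formula prenex. -/
def existsGtForallLe1 : ordLang.Formula (Fin 1) :=
  let p : ordLang.Term (Fin 1 ⊕ Fin 2) := .var (.inl 0)
  ∃' ∀' (p.lt (&0) ⊓ (Term.le (&0) (&1) ⟹ le1Symb.boundedFormula₂ (&0) (&1)))

theorem isSigma2_existsGtForallLe1 : IsSigma2 existsGtForallLe1 := by
  refine .ex (.of_isPi1 (.all (.of_isQF (.inf (.inf ?_ (.not ?_)) (.imp ?_ ?_)))))
  all_goals exact (BoundedFormula.IsAtomic.rel _ _).isQF

variable {le1 le2 : Ordinal → Ordinal → Prop} {α β δ : Ordinal}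

theorem realize_existsGtForallLe1 {v : Fin 1 → Segment le1 le2 β} :
    existsGtForallLe1.Realize v ↔ ∃ x : Segment le1 le2 β, ∀ y : Segment le1 le2 β,
      v 0 < x ∧ (x ≤ y → le1 x.1 y.1) := by
  simp [existsGtForallLe1, Formula.Realize, Segment.relMap_le1Symb, Fin.snoc]

theorem ElemSub2.exists_forall_le1 (h1 : ∀ a b, le1 a b ↔ ElemSub1 le1 le2 a b)
    (h : ElemSub2 le1 le2 α β) (hne : α ≠ β) (hδ : δ < α) :
    ∃ x < α, δ < x ∧ ∀ y, x ≤ y → y < α → le1 x y := by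
  have hle1 : ∀ y < β, α ≤ y → le1 α y := fun y hy hαy =>
    (h1 α y).2 (h.elemSub1.of_le_of_le hαy hy.le)
  let v : Fin 1 → Segment le1 le2 α := fun _ => ⟨δ, hδ⟩
  have hα : existsGtForallLe1.Realize v :=
    (h.2 1 _ isSigma2_existsGtForallLe1 v).2 <| realize_existsGtForallLe1.2
      ⟨⟨α, h.1.lt_of_ne hne⟩, fun y => ⟨hδ, hle1 y.1 y.2⟩⟩
  obtain ⟨x, hx⟩ := realize_existsGtForallLe1.1 hα
  exact ⟨x.1, x.2, (hx x).1, fun y hxy hy => (hx ⟨y, hy⟩).2 hxy⟩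

theorem ElemSub2.isSuccPrelimit (h1 : ∀ a b, le1 a b ↔ ElemSub1 le1 le2 a b)
    (h : ElemSub2 le1 le2 α β) (hne : α ≠ β) : Order.IsSuccPrelimit α :=
  Order.isSuccPrelimit_of_succ_lt fun _ hδ =>
    have ⟨_, hx, hδx, _⟩ := h.exists_forall_le1 h1 hne hδ
    (Order.succ_le_of_lt hδx).trans_lt hx

theorem ElemSub2.exists_gt_lt1 (h1 : ∀ a b, le1 a b ↔ ElemSub1 le1 le2 a b)
    (h : ElemSub2 le1 le2 α β) (hne : α ≠ β) (hδ : δ < α) : ∃ γ, Lt1 le1 γ α ∧ δ < γ := by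
  obtain ⟨x, hx, hδx, hxy⟩ := h.exists_forall_le1 h1 hne hδ
  refine ⟨x, ⟨(h1 x α).2 ?_, hx.ne⟩, hδx⟩
  exact elemSub1_of_isSuccPrelimit (h.isSuccPrelimit h1 hne) hx fun y hle hy =>
    (h1 x y).1 (hxy y hle hy)

end Reflection

theorem stmt8_general {le1 le2 : Ordinal → Ordinal → Prop}
    (h1 : ∀ a b, le1 a b ↔ ElemSub1 le1 le2 a b) {α β : Ordinal} (h : ElemSub2 le1 le2 α β)
    (hne : α ≠ β) :
    {γ : Ordinal | Lt1 le1 γ α}.Nonempty ∧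
    sSup {γ : Ordinal | Lt1 le1 γ α} = α ∧
    α ∉ {γ : Ordinal | Lt1 le1 γ α} := by
  have hnonempty : {γ : Ordinal | Lt1 le1 γ α}.Nonempty :=
    have ⟨γ, hγ, _⟩ := h.exists_gt_lt1 h1 hne (h.elemSub1.pos hne)
    ⟨γ, hγ⟩
  have hle : ∀ γ ∈ {γ : Ordinal | Lt1 le1 γ α}, γ ≤ α := fun γ hγ => ((h1 γ α).1 hγ.1).1
  have hsup : sSup {γ : Ordinal | Lt1 le1 γ α} = α :=
    csSup_eq_of_forall_le_of_forall_lt_exists_gt hnonempty hle fun _ hδ =>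
      h.exists_gt_lt1 h1 hne hδ
  exact ⟨hnonempty, hsup, fun hα => hα.2 rfl⟩

theorem stmt8 (le1 le2 : Ordinal → Ordinal → Prop) (h : IsR2Pair le1 le2)
    (α : Ordinal) (hα : ∃ β, Lt2 le2 α β) :
    {γ : Ordinal | Lt1 le1 γ α}.Nonempty ∧
    sSup {γ : Ordinal | Lt1 le1 γ α} = α ∧
    α ∉ {γ : Ordinal | Lt1 le1 γ α} := by
  obtain ⟨β, hαβ, hne⟩ := hα
  exact stmt8_general h.1 ((h.2 α β).1 hαβ) hne
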